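/- (Decidability of LFD) Fix the vocabulary with variables V = ℕ and an encodable set of predicate symbols with computable arity function. Then validity of LFD formulas on dependence models is decidable: there exists a computable function f from LFD formulas to Bool such that f(φ) = true iff φ is true at every admissible assignment of every dependence model. -/

import Mathlib

namespace LFD

/-- LFD formulas over variables `V` and a relational vocabulary `Pred` with arity map `ar`:
atoms `P x₁…x_n`, negation, conjunction, dependence modalities `𝔻_X φ`,
and dependence atoms `D_X y` (with `X ⊆ V` finite). -/
inductive Formula (V Pred : Type) (ar : Pred → ℕ) : Type where
  | atom (P : Pred) (x : Fin (ar P) → V)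
  | neg (φ : Formula V Pred ar)
  | conj (φ ψ : Formula V Pred ar)
  | dd (X : Finset V) (φ : Formula V Pred ar)
  | dep (X : Finset V) (y : V)

variable {V Pred O : Type} {ar : Pred → ℕ}

/-- The free variables of an LFD formula. -/
def Free [DecidableEq V] : Formula V Pred ar → Finset V
  | .atom _ x => Finset.univ.image x
  | .neg φ => Free φ
  | .conj φ ψ => Free φ ∪ Free ψ
  | .dd X _ => X
  | .dep X _ => X

/-- A dependence model: an interpretation `I` of each predicate symbol as a set of
tuples of objects, together with a set `A` of admissible assignments. -/
structure DepModel (V Pred : Type) (ar : Pred → ℕ) (O : Type) where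
  I : (P : Pred) → Set (Fin (ar P) → O)
  A : Set (V → O)

/-- `s =_X t` : the assignments `s` and `t` agree on all variables in `X`. -/
def agree (X : Set V) (s t : V → O) : Prop := ∀ x ∈ X, s x = t x

/-- Truth of an LFD formula at an assignment in a dependence model. -/
def Sat (M : DepModel V Pred ar O) : Formula V Pred ar → (V → O) → Prop
  | .atom P x, s => (fun i => s (x i)) ∈ M.I P
  | .neg φ, s => ¬ Sat M φ s
  | .conj φ ψ, s => Sat M φ s ∧ Sat M ψ s
  | .dd X φ, s => ∀ t ∈ M.A, agree (↑X) s t → Sat M φ t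
  | .dep X y, s => ∀ t ∈ M.A, agree (↑X) s t → s y = t y

end LFD

namespace LFD

/-- A Gödel numbering of LFD formulas over variables `V = ℕ` and an encodable set of
predicate symbols. -/
def enc {Pred : Type} [Encodable Pred] {ar : Pred → ℕ} : Formula ℕ Pred ar → ℕ
  | .atom P x => Nat.pair 0 (Nat.pair (Encodable.encode P) (Encodable.encode (List.ofFn x)))
  | .neg φ => Nat.pair 1 (enc φ)
  | .conj φ ψ => Nat.pair 2 (Nat.pair (enc φ) (enc ψ))
  | .dd X φ => Nat.pair 3 (Nat.pair (Encodable.encode X) (enc φ))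
  | .dep X y => Nat.pair 4 (Nat.pair (Encodable.encode X) y)

/-- The list coded by a number. -/
def Ls (j : ℕ) : List ℕ := Denumerable.ofNat (List ℕ) j

/-- Code with tag `c` and two components. -/
def cd (c a b : ℕ) : ℕ := Nat.pair c (Nat.pair a b)

/-- Bit `c` of `w` is set. -/
def bt (w c : ℕ) : Prop := w.testBit c = true

/-- At `w`, the set `k` determines all variables in `j`. -/
def Sub (w k j : ℕ) : Prop := ∀ y ∈ Ls j, bt w (cd 4 k y)

/-- `w` and `v` agree on the facts local to `j`. -/
def Loc (N w v j : ℕ) : Prop := ∀ z < N, (bt w (cd 4 j z) ↔ bt v (cd 4 j z)) ∧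
  (bt w (cd 3 j z) ↔ bt v (cd 3 j z)) ∧ (bt w (cd 0 z j) ↔ bt v (cd 0 z j))

/-- Similarity of types. -/
def Sim (N w v k : ℕ) : Prop := ∀ j < N, Sub w k j → Loc N w v j

/-- Local coherence of a type `w` in a set of types `Q`. -/
def Good (N B Q w : ℕ) : Prop := ∀ k < N, Sub w k k ∧ (bt w (Nat.pair 1 k) ↔ ¬ bt w k) ∧
  ∀ j < N, (Sub w k j → ∀ z < N, bt w (cd 4 j z) → bt w (cd 4 k z)) ∧
    (bt w (cd 2 k j) ↔ bt w k ∧ bt w j) ∧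
    (bt w (cd 3 k j) ↔ ∀ v < B, bt Q v → Sim N w v k → bt v j)

/-- Number of bits in a type. -/
def KK (n : ℕ) : ℕ := cd 5 (n + 1) (n + 1) + 1

/-- There is a quasi-model refuting the formula with code `n`. -/
def Refut (n : ℕ) : Prop := ∃ Q < 2 ^ (2 ^ KK n), ∃ w < 2 ^ KK n, (bt Q w ∧ ¬ bt w n) ∧
  ∀ v < 2 ^ KK n, bt Q v → Good (n + 1) (2 ^ KK n) Q v

/-! ### Primitive recursiveness -/

section prim
variable {α : Type} [Primcodable α]

theorem pp_imp {p q : α → Prop} (hp : PrimrecPred p) (hq : PrimrecPred q) :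
    PrimrecPred fun a => (p a → q a) :=
  (hp.not.or hq).of_eq fun _ => imp_iff_not_or.symm

theorem pp_iff {p q : α → Prop} (hp : PrimrecPred p) (hq : PrimrecPred q) :
    PrimrecPred fun a => (p a ↔ q a) :=
  ((pp_imp hp hq).and (pp_imp hq hp)).of_eq fun _ => iff_def.symm

theorem pp_mem {g : α → List ℕ} {R : α → ℕ → Prop} (hg : Primrec g)
    (h : PrimrecPred fun p : α × ℕ => R p.1 p.2) : PrimrecPred fun a => ∀ x ∈ g a, R a x := by
  have h' : PrimrecRel fun (x : ℕ) (a : α) => R a x :=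
    h.comp (Primrec.pair Primrec.snd Primrec.fst)
  exact h'.forall_mem_list.comp hg Primrec.id

theorem pp_all {g : α → ℕ} {R : α → ℕ → Prop} (hg : Primrec g)
    (h : PrimrecPred fun p : α × ℕ => R p.1 p.2) : PrimrecPred fun a => ∀ x < g a, R a x :=
  (pp_mem (Primrec.list_range.comp hg) h).of_eq (by simp)

theorem pp_ex {g : α → ℕ} {R : α → ℕ → Prop} (hg : Primrec g)
    (h : PrimrecPred fun p : α × ℕ => R p.1 p.2) : PrimrecPred fun a => ∃ x < g a, R a x :=
  (pp_all (R := fun a x => ¬ R a x) hg h.not).not.of_eq (by simp)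

theorem p_two_pow {f : α → ℕ} (hf : Primrec f) : Primrec fun a => 2 ^ f a := by
  have h : Primrec fun n : ℕ => 2 ^ n :=
    (Primrec.nat_rec₁ 1 (f := fun _ r => 2 * r)
      ((Primrec.nat_mul.comp (Primrec.const 2) Primrec.snd).to₂)).of_eq fun n => by
        induction n with
        | zero => rfl
        | succ n ih => simp only [pow_succ] at *; rw [← ih]; exact Nat.mul_comm _ _
  exact h.comp hf

theorem pp_bt {f g : α → ℕ} (hf : Primrec f) (hg : Primrec g) :
    PrimrecPred fun a => bt (f a) (g a) := by
  have h : PrimrecPred fun a => f a / 2 ^ g a % 2 = 1 :=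
    Primrec.eq.comp (Primrec.nat_mod.comp (Primrec.nat_div.comp hf (p_two_pow hg))
      (Primrec.const 2)) (Primrec.const 1)
  exact h.of_eq fun a => by simp [bt, Nat.testBit_eq_decide_div_mod_eq]

theorem p_cd {c : ℕ} {f g : α → ℕ} (hf : Primrec f) (hg : Primrec g) :
    Primrec fun a => cd c (f a) (g a) :=
  Primrec₂.natPair.comp (Primrec.const c) (Primrec₂.natPair.comp hf hg)

theorem p_fst {β : Type} [Primcodable β] {f : α → ℕ} (hf : Primrec f) :
    Primrec fun p : α × β => f p.1 := hf.comp Primrec.fst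

theorem pp_Sub {w k j : α → ℕ} (hw : Primrec w) (hk : Primrec k) (hj : Primrec j) :
    PrimrecPred fun a => Sub (w a) (k a) (j a) :=
  pp_mem ((Primrec.ofNat (List ℕ)).comp hj) (pp_bt (p_fst hw) (p_cd (p_fst hk) Primrec.snd))

theorem pp_Loc {N w v j : α → ℕ} (hN : Primrec N) (hw : Primrec w) (hv : Primrec v)
    (hj : Primrec j) : PrimrecPred fun a => Loc (N a) (w a) (v a) (j a) :=
  pp_all hN
    ((pp_iff (pp_bt (p_fst hw) (p_cd (p_fst hj) Primrec.snd))
        (pp_bt (p_fst hv) (p_cd (p_fst hj) Primrec.snd))).and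
      ((pp_iff (pp_bt (p_fst hw) (p_cd (p_fst hj) Primrec.snd))
        (pp_bt (p_fst hv) (p_cd (p_fst hj) Primrec.snd))).and
      (pp_iff (pp_bt (p_fst hw) (p_cd Primrec.snd (p_fst hj)))
        (pp_bt (p_fst hv) (p_cd Primrec.snd (p_fst hj))))))

theorem pp_Sim {N w v k : α → ℕ} (hN : Primrec N) (hw : Primrec w) (hv : Primrec v)
    (hk : Primrec k) : PrimrecPred fun a => Sim (N a) (w a) (v a) (k a) :=
  pp_all hN (pp_imp (pp_Sub (p_fst hw) (p_fst hk) Primrec.snd)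
    (pp_Loc (p_fst hN) (p_fst hw) (p_fst hv) Primrec.snd))

theorem pp_Good {N B Q w : α → ℕ} (hN : Primrec N) (hB : Primrec B) (hQ : Primrec Q)
    (hw : Primrec w) : PrimrecPred fun a => Good (N a) (B a) (Q a) (w a) := by
  have k1 : Primrec fun p : α × ℕ => p.2 := Primrec.snd
  have k2 : Primrec fun p : (α × ℕ) × ℕ => p.1.2 := p_fst k1
  have j2 : Primrec fun p : (α × ℕ) × ℕ => p.2 := Primrec.snd
  have w2 := p_fst (β := ℕ) (p_fst (β := ℕ) hw)
  have N2 := p_fst (β := ℕ) (p_fst (β := ℕ) hN)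
  have B2 := p_fst (β := ℕ) (p_fst (β := ℕ) hB)
  have Q2 := p_fst (β := ℕ) (p_fst (β := ℕ) hQ)
  refine pp_all hN ((pp_Sub (p_fst hw) k1 k1).and ((pp_iff (pp_bt (p_fst hw)
    (Primrec₂.natPair.comp (Primrec.const 1) k1)) (pp_bt (p_fst hw) k1).not).and
      (pp_all (p_fst hN) ?_)))
  refine (pp_imp (pp_Sub w2 k2 j2) (pp_all N2 (pp_imp (pp_bt (p_fst w2)
    (p_cd (p_fst j2) Primrec.snd)) (pp_bt (p_fst w2)
    (p_cd (p_fst k2) Primrec.snd))))).and (.and ?_ ?_)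
  · exact pp_iff (pp_bt w2 (p_cd k2 j2)) ((pp_bt w2 k2).and (pp_bt w2 j2))
  · exact pp_iff (pp_bt w2 (p_cd k2 j2)) (pp_all B2 (pp_imp (pp_bt (p_fst Q2) Primrec.snd)
      (pp_imp (pp_Sim (p_fst N2) (p_fst w2) Primrec.snd (p_fst k2))
        (pp_bt Primrec.snd (p_fst j2)))))

theorem pp_Refut : PrimrecPred Refut := by
  have hN : Primrec fun n : ℕ => n + 1 := Primrec.succ
  have hK : Primrec fun n : ℕ => KK n := Primrec.succ.comp (p_cd hN hN)
  have hB := p_two_pow hK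
  have Q1 : Primrec fun p : ℕ × ℕ => p.2 := Primrec.snd
  have w2 : Primrec fun p : (ℕ × ℕ) × ℕ => p.2 := Primrec.snd
  have n2 : Primrec fun p : (ℕ × ℕ) × ℕ => p.1.1 := p_fst Primrec.fst
  refine pp_ex (p_two_pow hB) (pp_ex (p_fst hB)
    (((pp_bt (p_fst Q1) w2).and (pp_bt w2 n2).not).and
    (pp_all (p_fst (p_fst hB)) (pp_imp (pp_bt (p_fst (p_fst Q1)) Primrec.snd)
      (pp_Good (p_fst (p_fst (p_fst hN))) (p_fst (p_fst (p_fst hB)))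
        (p_fst (p_fst Q1)) Primrec.snd)))))

end prim

/-! ### Codes -/

theorem Ls_encode (l : List ℕ) : Ls (Encodable.encode l) = l := Denumerable.ofNat_encode l

theorem mem_Ls_finset (X : Finset ℕ) (y : ℕ) : y ∈ Ls (Encodable.encode X) ↔ y ∈ X := by
  have : ∃ l : List ℕ, Encodable.encode X = Encodable.encode l ∧ ∀ y, y ∈ l ↔ y ∈ X := by
    refine ⟨X.1.sort (Encodable.encode' ℕ ⁻¹'o (· ≤ ·)), rfl, fun y => ?_⟩
    simp
  obtain ⟨l, h, h'⟩ := this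
  rw [h, Ls_encode, h']

theorem lt_of_mem_Ls {y j : ℕ} (h : y ∈ Ls j) : y < j := by
  have : ∀ l : List ℕ, y ∈ l → y < Encodable.encode l := by
    intro l
    induction l with
    | nil => simp
    | cons a l ih =>
      intro h
      have h1 := Nat.left_le_pair a (Encodable.encode l)
      have h2 := Nat.right_le_pair a (Encodable.encode l)
      rw [Encodable.encode_list_cons]
      simp only [Encodable.encode_nat]
      rcases List.mem_cons.1 h with h | h
      · omega
      · have := ih h; omega
  have h2 := this _ h
  rwa [Ls, Denumerable.encode_ofNat] at h2

theorem cd_lt_KK {c a b n : ℕ} (hc : c < 5) (ha : a < n + 1) (hb : b < n + 1) :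
    cd c a b < KK n := by
  have h1 := Nat.pair_lt_pair_right c (Nat.pair_lt_pair_right a hb)
  have h2 := Nat.pair_lt_pair_right c (Nat.pair_lt_pair_left (n + 1) ha)
  have h3 := Nat.pair_lt_pair_left (Nat.pair (n + 1) (n + 1)) hc
  unfold KK cd; omega

theorem pair_lt_KK {k n : ℕ} (hk : k < n + 1) : Nat.pair 1 k < KK n := by
  have h0 := Nat.left_le_pair (n + 1) (n + 1)
  have h2 := Nat.pair_lt_pair_right 1 (show k < Nat.pair (n + 1) (n + 1) by omega)
  have h3 := Nat.pair_lt_pair_left (Nat.pair (n + 1) (n + 1)) (show 1 < 5 by omega)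
  unfold KK cd; omega

theorem lt_KK {k n : ℕ} (hk : k < n + 1) : k < KK n :=
  lt_of_le_of_lt (Nat.right_le_pair 1 k) (pair_lt_KK hk)

theorem exists_bits (K : ℕ) (p : ℕ → Prop) : ∃ w < 2 ^ K, ∀ c < K, (bt w c ↔ p c) := by
  classical
  refine ⟨Nat.ofBits (n := K) fun i => decide (p i), Nat.ofBits_lt_two_pow _, fun c hc => ?_⟩
  rw [bt, Nat.testBit_ofBits_lt _ _ hc]; simp

theorem lt_pair {c a : ℕ} (hc : 0 < c) : a < Nat.pair c a := by
  have := Nat.add_le_pair c a; omega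

theorem cd_left {c a b : ℕ} : a ≤ cd c a b :=
  (Nat.left_le_pair _ _).trans (Nat.right_le_pair _ _)

theorem cd_right {c a b : ℕ} : b ≤ cd c a b :=
  (Nat.right_le_pair _ _).trans (Nat.right_le_pair _ _)

/-! ### From models to quasi-models -/

section sem
variable {Pred O : Type} [Encodable Pred] {ar : Pred → ℕ}

theorem aux1 {c : ℕ} (h : 0 < c.unpair.1) : c.unpair.2 < c := by
  have := Nat.unpair_add_le c; omega

/-- Truth of codes. -/
def satc (M : DepModel ℕ Pred ar O) (c : ℕ) (s : ℕ → O) : Prop :=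
  if c.unpair.1 = 0 then ∃ (P : Pred) (x : Fin (ar P) → ℕ),
    Encodable.encode P = c.unpair.2.unpair.1 ∧ List.ofFn x = Ls c.unpair.2.unpair.2 ∧
      (fun i => s (x i)) ∈ M.I P
  else if h : c.unpair.1 = 1 then ¬ satc M c.unpair.2 s
  else if h : c.unpair.1 = 2 then satc M c.unpair.2.unpair.1 s ∧ satc M c.unpair.2.unpair.2 s
  else if h : c.unpair.1 = 3 then
    ∀ t ∈ M.A, (∀ y ∈ Ls c.unpair.2.unpair.1, s y = t y) → satc M c.unpair.2.unpair.2 t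
  else ∀ t ∈ M.A, (∀ y ∈ Ls c.unpair.2.unpair.1, s y = t y) →
    s c.unpair.2.unpair.2 = t c.unpair.2.unpair.2
termination_by c
decreasing_by
  · exact aux1 (by omega)
  · exact (Nat.unpair_left_le _).trans_lt (aux1 (by omega))
  · exact (Nat.unpair_right_le _).trans_lt (aux1 (by omega))
  · exact (Nat.unpair_right_le _).trans_lt (aux1 (by omega))

variable (M : DepModel ℕ Pred ar O)

theorem satc_atom (p j : ℕ) (s : ℕ → O) : satc M (cd 0 p j) s ↔ ∃ (P : Pred) (x : Fin (ar P) → ℕ),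
    Encodable.encode P = p ∧ List.ofFn x = Ls j ∧ (fun i => s (x i)) ∈ M.I P := by
  rw [satc]; simp [cd]

theorem satc_neg (a : ℕ) (s : ℕ → O) : satc M (Nat.pair 1 a) s ↔ ¬ satc M a s := by
  rw [satc]; simp

theorem satc_conj (a b : ℕ) (s : ℕ → O) : satc M (cd 2 a b) s ↔ satc M a s ∧ satc M b s := by
  rw [satc]; simp [cd]

theorem satc_dd (k a : ℕ) (s : ℕ → O) : satc M (cd 3 k a) s ↔
    ∀ t ∈ M.A, (∀ y ∈ Ls k, s y = t y) → satc M a t := by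
  rw [satc]; simp [cd]

theorem satc_dep (k z : ℕ) (s : ℕ → O) : satc M (cd 4 k z) s ↔
    ∀ t ∈ M.A, (∀ y ∈ Ls k, s y = t y) → s z = t z := by
  rw [satc]; simp [cd]

theorem satc_enc (φ : Formula ℕ Pred ar) : ∀ s, satc M (enc φ) s ↔ Sat M φ s := by
  induction φ with
  | atom P x =>
    intro s
    refine (satc_atom M _ _ s).trans ?_
    rw [Ls_encode]
    constructor
    · rintro ⟨P', x', h1, h2, h3⟩
      obtain rfl := Encodable.encode_injective h1
      obtain rfl := List.ofFn_injective h2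
      exact h3
    · intro h; exact ⟨P, x, rfl, rfl, h⟩
  | neg φ ih => intro s; exact (satc_neg M _ s).trans (not_congr (ih s))
  | conj φ ψ ih1 ih2 => intro s; exact (satc_conj M _ _ s).trans (and_congr (ih1 s) (ih2 s))
  | dd X φ ih =>
    intro s
    refine (satc_dd M _ _ s).trans ?_
    simp only [mem_Ls_finset, ih, Sat, agree, Finset.mem_coe]
  | dep X y =>
    intro s
    refine (satc_dep M _ _ s).trans ?_
    simp only [mem_Ls_finset, Sat, agree, Finset.mem_coe]

theorem satc_local {j z : ℕ} {s t : ℕ → O} (h : ∀ y ∈ Ls j, s y = t y) :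
    (satc M (cd 3 j z) s → satc M (cd 3 j z) t) ∧
      (satc M (cd 0 z j) s → satc M (cd 0 z j) t) := by
  refine ⟨?_, ?_⟩
  · rw [satc_dd, satc_dd]
    intro hs u hu hj
    exact hs u hu fun y hy => (h y hy).trans (hj y hy)
  · rw [satc_atom, satc_atom]
    rintro ⟨P, x, h1, h2, h3⟩
    refine ⟨P, x, h1, h2, ?_⟩
    have : (fun i => t (x i)) = fun i => s (x i) := by
      funext i
      refine (h _ ?_).symm
      rw [← h2]; exact List.mem_ofFn.2 ⟨i, rfl⟩
    rwa [this]

theorem satc_local4 {j z : ℕ} {s t : ℕ → O} (ht : t ∈ M.A) (h : ∀ y ∈ Ls j, s y = t y) :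
    satc M (cd 4 j z) s → satc M (cd 4 j z) t := by
  rw [satc_dep, satc_dep]
  intro hs u hu hj
  rw [← hs t ht h]
  exact hs u hu fun y hy => (h y hy).trans (hj y hy)

theorem refut_of_model {n : ℕ} {s : ℕ → O} (hs : s ∈ M.A) (hn : ¬ satc M n s) : Refut n := by
  obtain ⟨Q, hQ, hQ'⟩ := exists_bits (2 ^ KK n)
    (fun v => ∃ t ∈ M.A, ∀ c < KK n, (bt v c ↔ satc M c t))
  obtain ⟨w, hw, hw'⟩ := exists_bits (KK n) (fun c => satc M c s)
  refine ⟨Q, hQ, w, hw, ⟨(hQ' w hw).2 ⟨s, hs, hw'⟩, fun h => hn ((hw' n (lt_KK (by omega))).1 h)⟩,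
    ?_⟩
  clear! s w
  intro w hw hwQ k hk
  obtain ⟨s, hs, hsw⟩ := (hQ' w hw).1 hwQ
  have b : ∀ {v t c a b}, (∀ c < KK n, (bt v c ↔ satc M c t)) → c < 5 → a < n + 1 → b < n + 1 →
      (bt v (cd c a b) ↔ satc M (cd c a b) t) := fun h h1 h2 h3 => h _ (cd_lt_KK h1 h2 h3)
  have hsub : Sub w k k := by
    intro y hy
    have := lt_of_mem_Ls hy
    rw [b hsw (by omega) hk (by omega), satc_dep]
    intro t _ h; exact h y hy
  refine ⟨hsub, ?_, fun j hj => ⟨?_, ?_, ?_, ?_⟩⟩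
  · rw [hsw _ (pair_lt_KK hk), hsw _ (lt_KK hk), satc_neg]
  · intro hkj z hz hjz
    rw [b hsw (by omega) hj hz, satc_dep] at hjz
    rw [b hsw (by omega) hk hz, satc_dep]
    intro t ht h
    refine hjz t ht fun y hy => ?_
    have hy' := hkj y hy
    have := lt_of_mem_Ls hy
    rw [b hsw (by omega) hk (by omega), satc_dep] at hy'
    exact hy' t ht h
  · rw [b hsw (by omega) hk hj, hsw _ (lt_KK hk), hsw _ (lt_KK hj), satc_conj]
  · intro h v hv hvQ hsim
    obtain ⟨t, ht, htv⟩ := (hQ' v hv).1 hvQ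
    have h' := ((hsim k hk hsub j hj).2.1).1 h
    rw [b htv (by omega) hk hj, satc_dd] at h'
    rw [htv _ (lt_KK hj)]
    exact h' t ht fun _ _ => rfl
  · intro h
    rw [b hsw (by omega) hk hj, satc_dd]
    intro t ht hst
    obtain ⟨v, hv, hv'⟩ := exists_bits (KK n) (fun c => satc M c t)
    rw [← hv' _ (lt_KK hj)]
    refine h v hv ((hQ' v hv).2 ⟨t, ht, hv'⟩) ?_
    intro i hi hki z hz
    have hag : ∀ y ∈ Ls i, s y = t y := by
      intro y hy
      have hy' := hki y hy
      have := lt_of_mem_Ls hy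
      rw [b hsw (by omega) hk (by omega), satc_dep] at hy'
      exact hy' t ht hst
    have hag' : ∀ y ∈ Ls i, t y = s y := fun y hy => (hag y hy).symm
    rw [b hsw (by omega) hi hz, b hsw (by omega) hi hz, b hsw (by omega) hz hi,
      b hv' (by omega) hi hz, b hv' (by omega) hi hz, b hv' (by omega) hz hi]
    exact ⟨⟨satc_local4 M ht hag, satc_local4 M hs hag'⟩,
      ⟨(satc_local M hag).1, (satc_local M hag').1⟩, ⟨(satc_local M hag).2, (satc_local M hag').2⟩⟩

end sem

/-! ### From quasi-models to models -/

section unravel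

/-- Last type of a history. -/
def lst (w0 : ℕ) : List (ℕ × ℕ) → ℕ
  | [] => w0
  | p :: _ => p.2

/-- Admissible histories. -/
def ok (N B Q w0 : ℕ) : List (ℕ × ℕ) → Prop
  | [] => True
  | p :: π => ok N B Q w0 π ∧ p.1 < N ∧ p.2 < B ∧ bt Q p.2 ∧ Sim N (lst w0 π) p.2 p.1

/-- Origin of the value of `y` in a history. -/
def ro (y : ℕ) : List (ℕ × ℕ) → List (ℕ × ℕ)
  | [] => []
  | p :: π => if p.2.testBit (cd 4 p.1 y) = true then ro y π else p :: π

theorem ro_suffix (y : ℕ) (π : List (ℕ × ℕ)) : ro y π <:+ π := by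
  induction π with
  | nil => exact List.suffix_rfl
  | cons p π ih =>
    rw [ro]; split
    · exact ih.trans (List.suffix_cons _ _)
    · exact List.suffix_rfl

theorem ro_pos {y : ℕ} {p : ℕ × ℕ} {π : List (ℕ × ℕ)} (h : bt p.2 (cd 4 p.1 y)) :
    ro y (p :: π) = ro y π := by rw [ro]; exact if_pos h

theorem ro_neg {y : ℕ} {p : ℕ × ℕ} {π : List (ℕ × ℕ)} (h : ¬ bt p.2 (cd 4 p.1 y)) :
    ro y (p :: π) = p :: π := by rw [ro]; exact if_neg h

variable {N B Q w0 : ℕ}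

theorem Loc.symm {w v j : ℕ} (h : Loc N w v j) : Loc N v w j := fun z hz =>
  ⟨(h z hz).1.symm, (h z hz).2.1.symm, (h z hz).2.2.symm⟩

theorem Loc.refl (w j : ℕ) : Loc N w w j := fun _ _ => ⟨Iff.rfl, Iff.rfl, Iff.rfl⟩

theorem Loc.trans {u w v j : ℕ} (h : Loc N u w j) (h' : Loc N w v j) : Loc N u v j := fun z hz =>
  ⟨(h z hz).1.trans (h' z hz).1, (h z hz).2.1.trans (h' z hz).2.1,
    (h z hz).2.2.trans (h' z hz).2.2⟩

variable (hw0 : w0 < B) (hQw0 : bt Q w0) (hG : ∀ v < B, bt Q v → Good N B Q v)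

include hw0 hQw0 in
theorem lst_mem {π : List (ℕ × ℕ)} (h : ok N B Q w0 π) : lst w0 π < B ∧ bt Q (lst w0 π) := by
  cases π with
  | nil => exact ⟨hw0, hQw0⟩
  | cons p π => exact ⟨h.2.2.1, h.2.2.2.1⟩

include hw0 hQw0 hG in
theorem step {p : ℕ × ℕ} {π : List (ℕ × ℕ)} (h : ok N B Q w0 (p :: π)) {j : ℕ} (hj : j < N)
    (hs : Sub p.2 p.1 j) : Loc N p.2 (lst w0 π) j ∧
      ∀ y < N, bt p.2 (cd 4 j y) → ro y (p :: π) = ro y π := by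
  obtain ⟨h1, h2, h3, h4, h5⟩ := h
  obtain ⟨m1, m2⟩ := lst_mem hw0 hQw0 h1
  have g := hG _ m1 m2
  have g' := hG _ h3 h4
  have hz := h5 p.1 h2 (g _ h2).1
  refine ⟨(h5 j hj fun y hy => ?_).symm, fun y hy hb => ro_pos ?_⟩
  · have := lt_of_mem_Ls hy
    exact ((hz y (by omega)).1).2 (hs y hy)
  · exact (((g' _ h2).2.2 j hj).1 hs) y hy hb

include hw0 hQw0 hG in
theorem transfer (m : ℕ) : ∀ (s t : List (ℕ × ℕ)), s.length + t.length = m →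
    ok N B Q w0 s → ok N B Q w0 t → ∀ j < N, (∀ x ∈ Ls j, ro x s = ro x t) →
    Loc N (lst w0 s) (lst w0 t) j ∧ ∀ y < N, bt (lst w0 s) (cd 4 j y) → ro y s = ro y t := by
  induction m using Nat.strong_induction_on with
  | _ m ih =>
    have main : ∀ (s t : List (ℕ × ℕ)), s.length + t.length = m → t.length ≤ s.length →
        ok N B Q w0 s → ok N B Q w0 t → ∀ j < N, (∀ x ∈ Ls j, ro x s = ro x t) →
        Loc N (lst w0 s) (lst w0 t) j ∧
          ∀ y < N, bt (lst w0 s) (cd 4 j y) → ro y s = ro y t := by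
      intro s t hm hl hs ht j hj hx
      by_cases hst : s = t
      · subst hst; exact ⟨Loc.refl _ _, fun _ _ _ => rfl⟩
      cases s with
      | nil =>
        exfalso; apply hst
        exact (List.length_eq_zero_iff.1 (by simpa using hl)).symm
      | cons p π =>
        have hsub : Sub p.2 p.1 j := by
          intro x hxj
          by_contra hb
          have h1 := hx x hxj
          rw [ro_neg hb] at h1
          have h2 := ro_suffix x t
          rw [← h1] at h2
          exact hst (h2.eq_of_length_le hl)
        obtain ⟨q1, q2⟩ := step hw0 hQw0 hG hs hj hsub
        have := ih (π.length + t.length) (by simp only [List.length_cons] at hm; omega) π t rfl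
          hs.1 ht j hj (fun x hxj => by rw [← hx x hxj, ro_pos (hsub x hxj)])
        refine ⟨q1.trans this.1, fun y hy hb => ?_⟩
        rw [q2 y hy hb]
        exact this.2 y hy ((q1 y hy).1.1 hb)
    intro s t hm hs ht j hj hx
    rcases Nat.le_total t.length s.length with hl | hl
    · exact main s t hm hl hs ht j hj hx
    · obtain ⟨a, b⟩ := main t s (by omega) hl ht hs j hj fun x hxj => (hx x hxj).symm
      exact ⟨a.symm, fun y hy hb => (b y hy ((a y hy).1.2 hb)).symm⟩

variable {Pred : Type} [Encodable Pred] {ar : Pred → ℕ}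

/-- The assignment of a history. -/
def asg (π : List (ℕ × ℕ)) : ℕ → ℕ × List (ℕ × ℕ) := fun y => (y, ro y π)

/-- The unravelled model. -/
def UM (Pred : Type) [Encodable Pred] (ar : Pred → ℕ) (N B Q w0 : ℕ) :
    DepModel ℕ Pred ar (ℕ × List (ℕ × ℕ)) where
  I P := {o | ∃ (π : List (ℕ × ℕ)) (x : Fin (ar P) → ℕ), ok N B Q w0 π ∧
    (o = fun i => asg π (x i)) ∧ bt (lst w0 π) (enc (Formula.atom (ar := ar) P x))}
  A := {s | ∃ π, ok N B Q w0 π ∧ s = asg π}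

include hw0 hQw0 hG in
theorem truth (φ : Formula ℕ Pred ar) : enc φ < N → ∀ π, ok N B Q w0 π →
    (Sat (UM Pred ar N B Q w0) φ (asg π) ↔ bt (lst w0 π) (enc φ)) := by
  have good : ∀ π, ok N B Q w0 π → Good N B Q (lst w0 π) := fun π h =>
    hG _ (lst_mem hw0 hQw0 h).1 (lst_mem hw0 hQw0 h).2
  have succ : ∀ π, ok N B Q w0 π → ∀ X : Finset ℕ, Encodable.encode X < N → ∀ v < B, bt Q v →
      Sim N (lst w0 π) v (Encodable.encode X) →
      ok N B Q w0 ((Encodable.encode X, v) :: π) ∧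
        agree (X : Set ℕ) (asg π) (asg ((Encodable.encode X, v) :: π)) := by
    intro π h X hX v hv hvQ hsim
    refine ⟨⟨h, hX, hv, hvQ, hsim⟩, fun x hx => ?_⟩
    have hx' := (mem_Ls_finset X x).2 hx
    have := (hG v hv hvQ _ hX).1 x hx'
    show (x, _) = (x, _)
    rw [ro_pos this]
  have tr : ∀ s t, ok N B Q w0 s → ok N B Q w0 t → ∀ j < N,
      (∀ x ∈ Ls j, asg s x = asg t x) → Loc N (lst w0 s) (lst w0 t) j ∧
      ∀ y < N, bt (lst w0 s) (cd 4 j y) → ro y s = ro y t := fun s t hs ht j hj h =>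
    transfer hw0 hQw0 hG _ s t rfl hs ht j hj fun x hx => (Prod.ext_iff.1 (h x hx)).2
  induction φ with
  | atom P x =>
    intro hN π hπ
    have hj : Encodable.encode (List.ofFn x) < N := lt_of_le_of_lt cd_right hN
    have hp : Encodable.encode P < N := lt_of_le_of_lt cd_left hN
    constructor
    · rintro ⟨ρ, x', hρ, he, hb⟩
      have hxx : x' = x := by
        funext i
        exact (Prod.ext_iff.1 (congrFun he i)).1.symm
      subst hxx
      have := (tr π ρ hπ hρ _ hj (fun y hy => by
        rw [Ls_encode] at hy
        obtain ⟨i, rfl⟩ := List.mem_ofFn.1 hy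
        exact congrFun he i)).1
      exact ((this _ hp).2.2).2 hb
    · intro hb
      exact ⟨π, x, hπ, rfl, hb⟩
  | neg φ ih =>
    intro hN π hπ
    have h1 : enc φ < N := (lt_pair (by omega : 0 < 1)).trans hN
    exact (not_congr (ih h1 π hπ)).trans ((good π hπ _ h1).2.1).symm
  | conj φ ψ ih1 ih2 =>
    intro hN π hπ
    have h1 : enc φ < N := lt_of_le_of_lt cd_left hN
    have h2 : enc ψ < N := lt_of_le_of_lt cd_right hN
    exact (and_congr (ih1 h1 π hπ) (ih2 h2 π hπ)).trans (((good π hπ _ h1).2.2 _ h2).2.1).symm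
  | dd X φ ih =>
    intro hN π hπ
    have h1 : Encodable.encode X < N := lt_of_le_of_lt cd_left hN
    have h2 : enc φ < N := lt_of_le_of_lt cd_right hN
    have key := ((good π hπ _ h1).2.2 _ h2).2.2
    constructor
    · intro h
      refine key.2 fun v hv hvQ hsim => ?_
      obtain ⟨a, b⟩ := succ π hπ X h1 v hv hvQ hsim
      exact (ih h2 _ a).1 (h _ ⟨_, a, rfl⟩ b)
    · rintro h t ⟨ρ, hρ, rfl⟩ hag
      have hl := (tr π ρ hπ hρ _ h1 fun y hy => hag y ((mem_Ls_finset X y).1 hy)).1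
      have h' := ((hl _ h2).2.1).1 h
      have g := good ρ hρ
      obtain ⟨m1, m2⟩ := lst_mem hw0 hQw0 hρ
      exact (ih h2 ρ hρ).2 ((((g _ h1).2.2 _ h2).2.2).1 h' _ m1 m2 fun j _ _ => Loc.refl _ _)
  | dep X y =>
    intro hN π hπ
    have h1 : Encodable.encode X < N := lt_of_le_of_lt cd_left hN
    have h2 : y < N := lt_of_le_of_lt cd_right hN
    constructor
    · intro h
      obtain ⟨m1, m2⟩ := lst_mem hw0 hQw0 hπ
      obtain ⟨a, b⟩ := succ π hπ X h1 _ m1 m2 fun j _ _ => Loc.refl _ _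
      by_contra hb
      have e := (Prod.ext_iff.1 (h _ ⟨_, a, rfl⟩ b)).2
      change ro y π = ro y _ at e
      rw [ro_neg (p := (Encodable.encode X, lst w0 π)) hb] at e
      have := (ro_suffix y π).length_le
      rw [e] at this
      simp at this
    · rintro h t ⟨ρ, hρ, rfl⟩ hag
      have hl := (tr π ρ hπ hρ _ h1 fun y hy => hag y ((mem_Ls_finset X y).1 hy)).2 y h2 h
      show (y, _) = (y, _)
      rw [hl]

end unravel

/-- Decidability of LFD: over the vocabulary with variables `V = ℕ` and an encodable set
of predicate symbols with computable arity function, validity of LFD formulas on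
dependence models is decidable: there is a computable function `f` (on Gödel codes of
formulas) to `Bool` such that `f φ = true` iff `φ` is true at every admissible
assignment of every dependence model. -/
theorem stmt12 (Pred : Type) [Primcodable Pred] (ar : Pred → ℕ) (har : Computable ar) :
    ∃ f : ℕ → Bool, Computable f ∧
      ∀ φ : Formula ℕ Pred ar,
        (f (enc φ) = true ↔
          ∀ (O : Type) (M : DepModel ℕ Pred ar O) (s : ℕ → O), s ∈ M.A → Sat M φ s) := by
  classical
  refine ⟨fun n => decide (¬ Refut n), pp_Refut.not.decide.to_comp, fun φ => ?_⟩
  rw [decide_eq_true_iff]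
  constructor
  · intro h O M s hs
    by_contra hn
    exact h (refut_of_model M hs fun h' => hn ((satc_enc M φ s).1 h'))
  · rintro h ⟨Q, _, w, hw, ⟨hQw, hn⟩, hG⟩
    exact hn ((truth hw hQw hG φ (Nat.lt_succ_self _) [] trivial).1
      (h _ (UM Pred ar _ _ Q w) _ ⟨[], trivial, rfl⟩))

end LFD
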